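/- Under the hypotheses (H1)–(H4) of the preceding existence theorem (A RAP with exponential dichotomy and RAP-integral Green kernel; f RAP in t uniformly, Lipschitz with M(r) < α/(2K); ξ the unique RAP solution of y' = A(t)y + f(t,y); f C² in x with RAP Jacobian along ξ and δ < α/(4K²); g_ν RAP in t uniformly with g₀ ≡ 0, ‖g_ν‖_r → 0 and Lipschitz constants M₁(r,ν) → 0 as ν → 0⁺), assume additionally that g(t,x,ν) is uniformly continuous on ℝ × B[0,r̃] × [0,ν₀]. Then the unique RAP solutions ψ_ν of x' = A(t)x + f(t,x) + g_ν(t,x) lying in the r-neighborhood of ξ satisfy sup_{t∈ℝ} ‖ψ_ν(t) − ξ(t)‖ → 0 as ν → 0⁺; in particular ψ_ν(t) → ξ(t) for every t ∈ ℝ. -/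

import Mathlib

open MeasureTheory Filter Metric

noncomputable def opNorm {n : ℕ} (A : Matrix (Fin n) (Fin n) ℝ) : ℝ :=
  ‖LinearMap.toContinuousLinearMap (Matrix.toEuclideanLin A)‖

noncomputable def mulVecE {n : ℕ} (A : Matrix (Fin n) (Fin n) ℝ)
    (v : EuclideanSpace ℝ (Fin n)) : EuclideanSpace ℝ (Fin n) :=
  Matrix.toEuclideanLin A v

noncomputable def clmToMatrix {n : ℕ}
    (L : EuclideanSpace ℝ (Fin n) →L[ℝ] EuclideanSpace ℝ (Fin n)) :
    Matrix (Fin n) (Fin n) ℝ :=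
  Matrix.toEuclideanLin.symm (L : EuclideanSpace ℝ (Fin n) →ₗ[ℝ] EuclideanSpace ℝ (Fin n))

def RelativelyDense (S : Set ℝ) : Prop :=
  ∃ l > 0, ∀ a : ℝ, ∃ τ ∈ S, τ ∈ Set.Icc a (a + l)

def RAP {E : Type*} [NormedAddCommGroup E] (f : ℝ → E) : Prop :=
  (∃ C, ∀ t, ‖f t‖ ≤ C) ∧ UniformContinuous f ∧
  ∀ ε > 0, RelativelyDense
    {τ | Filter.limsup (fun t => ‖f (t + τ) - f t‖) (Filter.cocompact ℝ) < ε}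

def RAPUniform {E F : Type*} [NormedAddCommGroup E] [NormedAddCommGroup F]
    (f : ℝ → E → F) (S : Set E) : Prop :=
  (∃ C, ∀ t, ∀ x ∈ S, ‖f t x‖ ≤ C) ∧
  UniformContinuousOn (fun p : ℝ × E => f p.1 p.2) (Set.univ ×ˢ S) ∧
  ∀ ε > 0, RelativelyDense
    {τ | Filter.limsup (fun t => ⨆ x ∈ S, ‖f (t + τ) x - f t x‖) (Filter.cocompact ℝ) < ε}

def RAPMatrix {n : ℕ} (A : ℝ → Matrix (Fin n) (Fin n) ℝ) : Prop :=
  ∀ i j, RAP (fun t => A t i j)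

def IsFundamentalMatrix {n : ℕ} (A Φ : ℝ → Matrix (Fin n) (Fin n) ℝ) : Prop :=
  Φ 0 = 1 ∧ (∀ t, IsUnit (Φ t)) ∧
  ∀ t i j, HasDerivAt (fun τ => Φ τ i j) ((A t * Φ t) i j) t

def ExpDichotomy {n : ℕ} (Φ : ℝ → Matrix (Fin n) (Fin n) ℝ)
    (α K : ℝ) (P : Matrix (Fin n) (Fin n) ℝ) : Prop :=
  P * P = P ∧
  (∀ t s : ℝ, s ≤ t → opNorm (Φ t * P * (Φ s)⁻¹) ≤ K * Real.exp (-α * (t - s))) ∧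
  (∀ t s : ℝ, t < s → opNorm (Φ t * (1 - P) * (Φ s)⁻¹) ≤ K * Real.exp (-α * (s - t)))

noncomputable def GreenKernel {n : ℕ} (Φ : ℝ → Matrix (Fin n) (Fin n) ℝ)
    (P : Matrix (Fin n) (Fin n) ℝ) (t s : ℝ) : Matrix (Fin n) (Fin n) ℝ :=
  if s ≤ t then Φ t * P * (Φ s)⁻¹ else -(Φ t * (1 - P) * (Φ s)⁻¹)

def RAPIntegralProperty {n : ℕ} (G : ℝ → ℝ → Matrix (Fin n) (Fin n) ℝ) : Prop :=
  ∀ h : ℝ → EuclideanSpace ℝ (Fin n), RAP h →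
    RAP (fun t => ∫ s : ℝ, mulVecE (G t s) (h s))

/-!
An exponential dichotomy makes the bounded solution of `x' = A x + h` unique and equal to
`∫ G(t, s) h(s) ds`, which depends on `h` in the sup norm with Lipschitz constant `2K/α`.
The perturbed solutions near `ξ` are therefore the fixed points of `φ ↦ ∫ G(t, s) F_ν(s, φ(s)) ds`,
`F_ν = f + g_ν`, in the tube of radius `r` around `ξ`. This map has Lipschitz constant
`q_ν = (2K/α)(M + M₁(ν))` and moves `ξ` by at most `(2K/α) ‖g_ν(·, ξ)‖`; since `q_ν` tends to
`2MK/α < 1` and `g_ν(·, ξ)` to `0`, it contracts the tube into itself for small `ν`. It preserves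
the RAP functions because translation numbers for `F_ν` and `φ` can be chosen in common (Bohr's
argument). Finally `‖ψ_ν - ξ‖ ≤ (2K/α) ‖g_ν(·, ξ)‖ / (1 - q_ν)`, which tends to `0`.
-/

open scoped Topology NNReal BoundedContinuousFunction

section TranslationFamilies

theorem RelativelyDense.mono {S T : Set ℝ} (hS : RelativelyDense S) (hST : S ⊆ T) :
    RelativelyDense T := by
  obtain ⟨l, hl, h⟩ := hS
  exact ⟨l, hl, fun a => (h a).imp fun _ hτ => ⟨hST hτ.1, hτ.2⟩⟩

theorem relativelyDense_sub_of_finite_range {ι : Type*} {k : ℝ → ι} (hk : (Set.range k).Finite) :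
    RelativelyDense {τ | ∃ x y, k x = k y ∧ x - y = τ} := by
  obtain ⟨L, hL⟩ := (hk.image fun i => |Function.invFun k i|).bddAbove
  replace hL (x : ℝ) : |Function.invFun k (k x)| ≤ L := hL ⟨k x, ⟨x, rfl⟩, rfl⟩
  have hL0 : 0 ≤ L := (abs_nonneg _).trans (hL 0)
  refine ⟨2 * L + 1, by linarith, fun a => ⟨a + L - Function.invFun k (k (a + L)),
    ⟨_, _, (Function.invFun_eq ⟨_, rfl⟩).symm, rfl⟩, ?_⟩⟩
  have := abs_le.1 (hL (a + L))
  constructor <;> linarith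

/-- The formal properties shared by the sets `T ε` of `ε`-translation numbers of the various
almost periodic functions: errors add up under differences, small translations have small error,
and each `T ε` is relatively dense. -/
structure IsTranslationFamily (T : ℝ → Set ℝ) : Prop where
  sub_mem : ∀ {a b x y : ℝ}, x ∈ T a → y ∈ T b → x - y ∈ T (a + b)
  mem_nhds_zero : ∀ {ε : ℝ}, 0 < ε → T ε ∈ 𝓝 0
  relativelyDense : ∀ {ε : ℝ}, 0 < ε → RelativelyDense (T ε)

-- Bohr's argument: write `x = σ x + ρ x` with `σ x` a translation number and `0 ≤ ρ x ≤ l`, and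
-- colour `x` by the cell of length `η` that contains `ρ x`.
theorem IsTranslationFamily.exists_finite_coloring {T : ℝ → Set ℝ} (hT : IsTranslationFamily T)
    {ε : ℝ} (hε : 0 < ε) :
    ∃ k : ℝ → ℤ, (Set.range k).Finite ∧ ∀ x y, k x = k y → x - y ∈ T ε := by
  obtain ⟨η, hη, hηT⟩ := Metric.mem_nhds_iff.1 (hT.mem_nhds_zero (ε := ε / 3) (by positivity))
  obtain ⟨l, -, hl⟩ := hT.relativelyDense (ε := ε / 3) (by positivity)
  choose σ hσT hσ using fun x : ℝ => hl (x - l)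
  refine ⟨fun x => ⌊(x - σ x) / η⌋, (Set.finite_Icc 0 ⌊l / η⌋).subset ?_, fun x y hxy => ?_⟩
  · rintro _ ⟨x, rfl⟩
    obtain ⟨h₁, h₂⟩ := hσ x
    exact ⟨Int.floor_nonneg.2 (div_nonneg (by linarith) hη.le),
      Int.floor_le_floor (div_le_div_of_nonneg_right (by linarith) hη.le)⟩
  · have hcell : |(y - σ y) - (x - σ x)| < η := by
      have := Int.abs_sub_lt_one_of_floor_eq_floor hxy.symm
      rwa [← sub_div, abs_div, abs_of_pos hη, div_lt_one hη] at this
    have hsub := hT.sub_mem (hT.sub_mem (hσT x) (hσT y)) (hηT (mem_ball_zero_iff.2 hcell))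
    rwa [show σ x - σ y - (y - σ y - (x - σ x)) = x - y by ring, add_thirds] at hsub

theorem IsTranslationFamily.relativelyDense_inter {T T' : ℝ → Set ℝ} (hT : IsTranslationFamily T)
    (hT' : IsTranslationFamily T') {ε ε' : ℝ} (hε : 0 < ε) (hε' : 0 < ε') :
    RelativelyDense (T ε ∩ T' ε') := by
  obtain ⟨k, hk, hkT⟩ := hT.exists_finite_coloring hε
  obtain ⟨k', hk', hkT'⟩ := hT'.exists_finite_coloring hε'
  have hkk' : (Set.range fun x => (k x, k' x)).Finite :=
    (hk.prod hk').subset (by rintro _ ⟨x, rfl⟩; exact ⟨⟨x, rfl⟩, ⟨x, rfl⟩⟩)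
  refine (relativelyDense_sub_of_finite_range hkk').mono ?_
  rintro _ ⟨x, y, hxy, rfl⟩
  exact ⟨hkT x y (Prod.ext_iff.1 hxy).1, hkT' x y (Prod.ext_iff.1 hxy).2⟩

end TranslationFamilies

section RemotelyAlmostPeriodic

variable {X E F : Type*} [NormedAddCommGroup E] [NormedAddCommGroup F]

/-- The `τ` for which `f (t + τ) x` is `ε`-close to `f t x` for all `x ∈ S` once `|t|` is large.
Unlike a condition on a real-valued `limsup`, this does not depend on boundedness. -/
def remoteTranslations (f : ℝ → X → F) (S : Set X) (ε : ℝ) : Set ℝ :=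
  {τ | ∀ᶠ t in cocompact ℝ, ∀ x ∈ S, ‖f (t + τ) x - f t x‖ ≤ ε}

theorem sub_mem_remoteTranslations {f : ℝ → X → F} {S : Set X} {a b x y : ℝ}
    (hx : x ∈ remoteTranslations f S a) (hy : y ∈ remoteTranslations f S b) :
    x - y ∈ remoteTranslations f S (a + b) := by
  have hshift : Tendsto (· + -y) (cocompact ℝ) (cocompact ℝ) :=
    (Homeomorph.addRight (-y)).isClosedEmbedding.tendsto_cocompact
  filter_upwards [hshift.eventually hx, hshift.eventually hy] with t htx hty z hz
  have htx := htx z hz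
  have hty := hty z hz
  rw [show t + -y + x = t + (x - y) by ring] at htx
  rw [neg_add_cancel_right, norm_sub_rev] at hty
  exact (norm_sub_le_norm_sub_add_norm_sub _ _ _).trans (add_le_add htx hty)

theorem rapUniform_iff {f : ℝ → E → F} {S : Set E} : RAPUniform f S ↔
    (∃ C, ∀ t, ∀ x ∈ S, ‖f t x‖ ≤ C) ∧
    UniformContinuousOn (fun p : ℝ × E => f p.1 p.2) (Set.univ ×ˢ S) ∧
    ∀ ε > 0, RelativelyDense (remoteTranslations f S ε) := by
  refine and_congr_right fun ⟨C, hC⟩ => and_congr_right fun _ =>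
    ⟨fun h ε hε => (h ε hε).mono fun τ hτ => ?_,
      fun h ε hε => (h (ε / 2) (by positivity)).mono fun τ hτ => ?_⟩
  · have hle (t : ℝ) (x : E) : ⨆ _ : x ∈ S, ‖f (t + τ) x - f t x‖ ≤ max (C + C) 0 :=
      Real.iSup_le (fun hx => le_max_of_le_left
        ((norm_sub_le _ _).trans (add_le_add (hC _ x hx) (hC _ x hx)))) (le_max_right _ _)
    have hbdd : IsBoundedUnder (· ≤ ·) (cocompact ℝ)
        fun t => ⨆ x ∈ S, ‖f (t + τ) x - f t x‖ :=
      isBoundedUnder_of ⟨_, fun t => Real.iSup_le (hle t) (le_max_right _ _)⟩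
    have hlt : limsup (fun t => ⨆ x ∈ S, ‖f (t + τ) x - f t x‖) (cocompact ℝ) < ε := hτ
    filter_upwards [eventually_lt_of_limsup_lt hlt hbdd] with t ht x hx
    refine le_trans ?_ ht.le
    have := le_ciSup (f := fun x => ⨆ _ : x ∈ S, ‖f (t + τ) x - f t x‖)
      ⟨_, Set.forall_mem_range.2 (hle t)⟩ x
    rwa [ciSup_pos hx] at this
  · have hcobdd : IsCoboundedUnder (· ≤ ·) (cocompact ℝ)
        fun t => ⨆ x ∈ S, ‖f (t + τ) x - f t x‖ :=
      (isBoundedUnder_of ⟨0, fun t => Real.iSup_nonneg fun x => Real.iSup_nonneg fun _ =>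
        norm_nonneg _⟩ : IsBoundedUnder (· ≥ ·) _ _).isCoboundedUnder_le
    refine (limsup_le_of_le hcobdd ?_).trans_lt (half_lt_self hε)
    filter_upwards [hτ] with t ht
    exact Real.iSup_le (fun x => Real.iSup_le (ht x) (by positivity)) (by positivity)

theorem uniformContinuousOn_univ_prod_univ_fst_iff {α β γ : Type*} [UniformSpace α]
    [UniformSpace β] [UniformSpace γ] [Nonempty β] {φ : α → γ} :
    UniformContinuousOn (fun p : α × β => φ p.1) (Set.univ ×ˢ Set.univ) ↔ UniformContinuous φ := by
  rw [Set.univ_prod_univ, uniformContinuousOn_univ]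
  inhabit β
  exact ⟨fun h => h.comp (f := fun a => (a, default))
    (uniformContinuous_id.prodMk uniformContinuous_const), fun h => h.comp uniformContinuous_fst⟩

theorem rap_iff_rapUniform_unit {φ : ℝ → E} :
    RAP φ ↔ RAPUniform (fun t (_ : Unit) => φ t) Set.univ :=
  and_congr (by simp) (and_congr uniformContinuousOn_univ_prod_univ_fst_iff.symm (by simp))

theorem rap_iff {φ : ℝ → E} : RAP φ ↔ (∃ C, ∀ t, ‖φ t‖ ≤ C) ∧ UniformContinuous φ ∧
    ∀ ε > 0, RelativelyDense {τ | ∀ᶠ t in cocompact ℝ, ‖φ (t + τ) - φ t‖ ≤ ε} := by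
  rw [rap_iff_rapUniform_unit, rapUniform_iff]
  exact and_congr (by simp) (and_congr uniformContinuousOn_univ_prod_univ_fst_iff
    (by simp [remoteTranslations]))

theorem RAPUniform.isTranslationFamily {f : ℝ → E → F} {S : Set E} (hf : RAPUniform f S) :
    IsTranslationFamily (remoteTranslations f S) where
  sub_mem := sub_mem_remoteTranslations
  mem_nhds_zero {ε} hε := by
    obtain ⟨η, hη, h⟩ := Metric.uniformContinuousOn_iff.1 hf.2.1 ε hε
    filter_upwards [ball_mem_nhds 0 hη] with τ hτ
    refine Eventually.of_forall fun t x hx => ?_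
    rw [← dist_eq_norm]
    exact (h (t + τ, x) ⟨trivial, hx⟩ (t, x) ⟨trivial, hx⟩
      (by simpa [Prod.dist_eq, hη] using hτ)).le
  relativelyDense := (rapUniform_iff.1 hf).2.2 _

theorem RAPUniform.rap_comp {f : ℝ → E → F} {S : Set E} {φ : ℝ → E} (hf : RAPUniform f S)
    (hφ : RAP φ) (hφS : ∀ t, φ t ∈ S) : RAP fun t => f t (φ t) := by
  obtain ⟨C, hC⟩ := hf.1
  have hfuc := hf.2.1
  refine rap_iff.2 ⟨⟨C, fun t => hC t _ (hφS t)⟩, uniformContinuousOn_univ.1 <|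
    hfuc.comp (uniformContinuous_id.prodMk hφ.2.1).uniformContinuousOn
      fun t _ => ⟨trivial, hφS t⟩, fun ε hε => ?_⟩
  obtain ⟨δ, hδ, hfδ⟩ := Metric.uniformContinuousOn_iff.1 hfuc (ε / 2) (by positivity)
  refine (hf.isTranslationFamily.relativelyDense_inter
    (rap_iff_rapUniform_unit.1 hφ).isTranslationFamily (half_pos hε) (half_pos hδ)).mono ?_
  rintro τ ⟨hτf, hτφ⟩
  filter_upwards [hτf, hτφ] with t htf htφ
  have hφδ : dist (t, φ (t + τ)) (t, φ t) < δ := by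
    rw [dist_prod_same_left, dist_eq_norm]
    exact (htφ () trivial).trans_lt (half_lt_self hδ)
  calc ‖f (t + τ) (φ (t + τ)) - f t (φ t)‖
      ≤ ‖f (t + τ) (φ (t + τ)) - f t (φ (t + τ))‖ + ‖f t (φ (t + τ)) - f t (φ t)‖ :=
        norm_sub_le_norm_sub_add_norm_sub _ _ _
    _ ≤ ε / 2 + ε / 2 := by
        refine add_le_add (htf _ (hφS _)) ?_
        rw [← dist_eq_norm]
        exact (hfδ _ ⟨trivial, hφS _⟩ _ ⟨trivial, hφS _⟩ hφδ).le
    _ = ε := add_halves ε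

theorem RAPUniform.add {f g : ℝ → E → F} {S : Set E} (hf : RAPUniform f S)
    (hg : RAPUniform g S) : RAPUniform (fun t x => f t x + g t x) S := by
  obtain ⟨C, hC⟩ := hf.1
  obtain ⟨D, hD⟩ := hg.1
  refine rapUniform_iff.2 ⟨⟨C + D, fun t x hx => norm_add_le_of_le (hC t x hx) (hD t x hx)⟩,
    uniformContinuousOn_iff_restrict.2 ((uniformContinuousOn_iff_restrict.1 hf.2.1).add
      (uniformContinuousOn_iff_restrict.1 hg.2.1)), fun ε hε => ?_⟩
  refine (hf.isTranslationFamily.relativelyDense_inter hg.isTranslationFamily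
    (half_pos hε) (half_pos hε)).mono ?_
  rintro τ ⟨hτf, hτg⟩
  filter_upwards [hτf, hτg] with t htf htg x hx
  rw [add_sub_add_comm]
  exact (norm_add_le_of_le (htf x hx) (htg x hx)).trans_eq (add_halves ε)

theorem RAPUniform.prod_section {D : Type*} [NormedAddCommGroup D] {g : ℝ → E → D → F} {S : Set E}
    {ν : D} (hg : RAPUniform (fun t (p : E × D) => g t p.1 p.2) (S ×ˢ {ν})) :
    RAPUniform (fun t x => g t x ν) S := by
  obtain ⟨⟨C, hC⟩, huc, hT⟩ := rapUniform_iff.1 hg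
  refine rapUniform_iff.2 ⟨⟨C, fun t x hx => hC t (x, ν) ⟨hx, rfl⟩⟩, ?_, fun ε hε => ?_⟩
  · exact huc.comp (uniformContinuous_fst.prodMk
      (uniformContinuous_snd.prodMk uniformContinuous_const)).uniformContinuousOn
      fun p hp => ⟨trivial, hp.2, rfl⟩
  · exact (hT ε hε).mono fun τ hτ => hτ.mono fun t ht x hx => ht (x, ν) ⟨hx, rfl⟩

theorem isClosed_setOf_rap : IsClosed {φ : ℝ →ᵇ E | RAP φ} := by
  refine isClosed_of_closure_subset fun φ hφ => rap_iff.2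
    ⟨⟨‖φ‖, φ.norm_coe_le_norm⟩, uniformContinuous_of_uniform_approx_of_uniformContinuous
      fun u hu => ?_, fun ε hε => ?_⟩
  · obtain ⟨ε, hε, hεu⟩ := Metric.mem_uniformity_dist.1 hu
    obtain ⟨ψ, hψ, hψφ⟩ := Metric.mem_closure_iff.1 hφ ε hε
    exact ⟨ψ, hψ.2.1, fun t => hεu ((BoundedContinuousFunction.dist_coe_le_dist t).trans_lt hψφ)⟩
  · obtain ⟨ψ, hψ, hψφ⟩ := Metric.mem_closure_iff.1 hφ (ε / 3) (by positivity)
    have hclose (t : ℝ) : dist (φ t) (ψ t) ≤ ε / 3 :=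
      (BoundedContinuousFunction.dist_coe_le_dist t).trans hψφ.le
    refine ((rap_iff.1 hψ).2.2 (ε / 3) (by positivity)).mono fun τ hτ => ?_
    filter_upwards [hτ] with t ht
    calc ‖φ (t + τ) - φ t‖
        ≤ dist (φ (t + τ)) (ψ (t + τ)) + dist (ψ (t + τ)) (ψ t) + dist (ψ t) (φ t) := by
          rw [← dist_eq_norm]
          exact dist_triangle4 _ _ _ _
      _ ≤ ε / 3 + ε / 3 + ε / 3 := by
          rw [dist_comm (ψ t), dist_eq_norm (ψ (t + τ))]
          exact add_le_add (add_le_add (hclose _) ht) (hclose t)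
      _ = ε := add_thirds ε

/-- A remotely almost periodic function as a bounded continuous function. -/
noncomputable def RAP.toBCF {φ : ℝ → E} (hφ : RAP φ) : ℝ →ᵇ E :=
  BoundedContinuousFunction.ofNormedAddCommGroup φ hφ.2.1.continuous hφ.1.choose hφ.1.choose_spec

/-- The Nemytskii operator `φ ↦ (t ↦ f t (φ t))` on continuous functions with values in `S`. -/
noncomputable def RAPUniform.superposition {f : ℝ → E → F} {S : Set E} (hf : RAPUniform f S)
    {φ : ℝ → E} (hφ : Continuous φ) (hφS : ∀ t, φ t ∈ S) : ℝ →ᵇ F :=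
  BoundedContinuousFunction.ofNormedAddCommGroup (fun t => f t (φ t))
    (hf.2.1.continuousOn.comp_continuous (continuous_id.prodMk hφ) fun t => ⟨trivial, hφS t⟩)
    hf.1.choose fun t => hf.1.choose_spec t _ (hφS t)

theorem RAPUniform.dist_superposition_le {f : ℝ → E → F} {S : Set E} {q : ℝ≥0}
    (hf : RAPUniform f S) (hLip : ∀ t, LipschitzOnWith q (f t) S) {φ χ : ℝ →ᵇ E}
    (hφS : ∀ t, φ t ∈ S) (hχS : ∀ t, χ t ∈ S) :
    dist (hf.superposition φ.continuous hφS) (hf.superposition χ.continuous hχS) ≤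
      q * dist φ χ :=
  (BoundedContinuousFunction.dist_le (by positivity)).2 fun t =>
    ((hLip t).dist_le_mul _ (hφS t) _ (hχS t)).trans
      (by gcongr; exact BoundedContinuousFunction.dist_coe_le_dist t)

end RemotelyAlmostPeriodic

section ExponentialDichotomy

theorem integral_exp_neg_mul_abs_sub {α : ℝ} (hα : 0 < α) (t : ℝ) :
    ∫ s, Real.exp (-α * |t - s|) = 2 / α := by
  rw [integral_sub_left_eq_self fun s => Real.exp (-α * |s|),
    integral_comp_abs (f := fun s => Real.exp (-α * s)), integral_exp_mul_Ioi (neg_neg_of_pos hα)]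
  simp [div_eq_mul_inv]

theorem integrable_exp_neg_mul_abs_sub {α : ℝ} (hα : 0 < α) (t : ℝ) :
    Integrable fun s => Real.exp (-α * |t - s|) :=
  not_imp_comm.1 integral_undef (by rw [integral_exp_neg_mul_abs_sub hα]; positivity)

variable {E : Type*} [NormedAddCommGroup E] [NormedSpace ℝ E]

/-- The linear equation `x' = a t x` on a Banach space, with evolution operators `U t`, has an
exponential dichotomy with projection `p`. `U 0` need not be the identity. -/
structure OperatorDichotomy (a : ℝ → E →L[ℝ] E) (U : ℝ → E ≃L[ℝ] E) (p : E →L[ℝ] E)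
    (α K : ℝ) : Prop where
  hasDerivAt : ∀ t, HasDerivAt (fun s => (U s : E →L[ℝ] E)) (a t ∘L U t) t
  exponent_pos : 0 < α
  isIdempotentElem : IsIdempotentElem p
  norm_stable_le : ∀ {t s}, s ≤ t →
    ‖(U t ∘L p ∘L (U s).symm : E →L[ℝ] E)‖ ≤ K * Real.exp (-α * (t - s))
  norm_unstable_le : ∀ {t s}, t < s →
    ‖(U t ∘L (1 - p) ∘L (U s).symm : E →L[ℝ] E)‖ ≤ K * Real.exp (-α * (s - t))

/-- The Green kernel of a dichotomy with evolution operators `U` and projection `p`. -/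
noncomputable def greenOperator (U : ℝ → E ≃L[ℝ] E) (p : E →L[ℝ] E) (t s : ℝ) : E →L[ℝ] E :=
  if s ≤ t then U t ∘L p ∘L (U s).symm else -(U t ∘L (1 - p) ∘L (U s).symm)

/-- The candidate `t ↦ ∫ G(t, s) h(s) ds` for the bounded solution of `x' = a t x + h t`. -/
noncomputable def greenIntegral (U : ℝ → E ≃L[ℝ] E) (p : E →L[ℝ] E) (h : ℝ → E) (t : ℝ) : E :=
  ∫ s, greenOperator U p t s (h s)

theorem symm_greenOperator_apply_sub (U : ℝ → E ≃L[ℝ] E) (p : E →L[ℝ] E) (h : ℝ → E)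
    (t r s : ℝ) :
    (U t).symm (greenOperator U p t s (h s)) -
        (U r).symm (greenOperator U p r s (h s)) =
      (Set.Ioc r t).indicator (fun s => (U s).symm (h s)) s -
        (Set.Ioc t r).indicator (fun s => (U s).symm (h s)) s := by
  have hsymm (t : ℝ) : (U t).symm (greenOperator U p t s (h s)) =
      if s ≤ t then p ((U s).symm (h s))
      else p ((U s).symm (h s)) - (U s).symm (h s) := by
    rw [greenOperator]
    split_ifs <;> simp
  rw [hsymm, hsymm]
  rcases le_or_gt s t with ht | ht <;> rcases le_or_gt s r with hr | hr <;>
    simp [Set.indicator, ht, hr, not_lt.2, not_le.2]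

namespace OperatorDichotomy

variable {a : ℝ → E →L[ℝ] E} {U : ℝ → E ≃L[ℝ] E} {p : E →L[ℝ] E} {α K : ℝ}

theorem const_nonneg (H : OperatorDichotomy a U p α K) : 0 ≤ K := by
  simpa using (norm_nonneg _).trans (H.norm_stable_le (le_refl 0))

theorem two_mul_div_nonneg (H : OperatorDichotomy a U p α K) : 0 ≤ 2 * K / α :=
  div_nonneg (mul_nonneg zero_le_two H.const_nonneg) H.exponent_pos.le

theorem norm_greenOperator_le (H : OperatorDichotomy a U p α K) (t s : ℝ) :
    ‖greenOperator U p t s‖ ≤ K * Real.exp (-α * |t - s|) := by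
  rcases le_or_gt s t with hst | hts
  · rw [greenOperator, if_pos hst, abs_of_nonneg (sub_nonneg.2 hst)]
    exact H.norm_stable_le hst
  · rw [greenOperator, if_neg hts.not_ge, norm_neg, abs_sub_comm, abs_of_pos (sub_pos.2 hts)]
    exact H.norm_unstable_le hts

theorem norm_greenOperator_apply_le (H : OperatorDichotomy a U p α K) (h : ℝ →ᵇ E) (t s : ℝ) :
    ‖greenOperator U p t s (h s)‖ ≤ K * ‖h‖ * Real.exp (-α * |t - s|) :=
  ((greenOperator U p t s).le_of_opNorm_le_of_le (H.norm_greenOperator_le t s)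
    (h.norm_coe_le_norm s)).trans_eq (by ring)

theorem norm_greenIntegral_le (H : OperatorDichotomy a U p α K) (h : ℝ →ᵇ E) (t : ℝ) :
    ‖greenIntegral U p h t‖ ≤ 2 * K / α * ‖h‖ :=
  calc ‖greenIntegral U p h t‖
      ≤ ∫ s, K * ‖h‖ * Real.exp (-α * |t - s|) := norm_integral_le_of_norm_le
        ((integrable_exp_neg_mul_abs_sub H.exponent_pos t).const_mul _)
        (Eventually.of_forall (H.norm_greenOperator_apply_le h t))
    _ = 2 * K / α * ‖h‖ := by
      rw [integral_const_mul, integral_exp_neg_mul_abs_sub H.exponent_pos]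
      ring

variable [CompleteSpace E]

theorem hasDerivAt_symm (H : OperatorDichotomy a U p α K) (t : ℝ) :
    HasDerivAt (fun s => ((U s).symm : E →L[ℝ] E)) (-((U t).symm ∘L a t)) t := by
  have hinverse : HasFDerivAt Ring.inverse _ (U t : E →L[ℝ] E) :=
    hasFDerivAt_ringInverse (𝕜 := ℝ) (U t).toUnit
  have hcomp := hinverse.comp_hasDerivAt t (H.hasDerivAt t)
  simp only [Function.comp_def, ContinuousLinearMap.ringInverse_equiv,
    ContinuousLinearMap.inverse_equiv] at hcomp
  refine hcomp.congr_deriv (ContinuousLinearMap.ext fun v => ?_)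
  simp [show (↑(U t).toUnit⁻¹ : E →L[ℝ] E) = (U t).symm from rfl]

theorem continuous_symm (H : OperatorDichotomy a U p α K) :
    Continuous fun s => ((U s).symm : E →L[ℝ] E) :=
  continuous_iff_continuousAt.2 fun t => (H.hasDerivAt_symm t).continuousAt

theorem integrable_greenOperator_apply (H : OperatorDichotomy a U p α K) (h : ℝ →ᵇ E) (t : ℝ) :
    Integrable fun s => greenOperator U p t s (h s) := by
  refine ((integrable_exp_neg_mul_abs_sub H.exponent_pos t).const_mul (K * ‖h‖)).mono' ?_
    (Eventually.of_forall (H.norm_greenOperator_apply_le h t))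
  have hmeas (b : E →L[ℝ] E) : StronglyMeasurable fun s => b ((U s).symm (h s)) :=
    (b.continuous.comp (H.continuous_symm.clm_apply h.continuous)).stronglyMeasurable
  have hpiecewise : StronglyMeasurable fun s =>
      if s ≤ t then (U t ∘L p : E →L[ℝ] E) ((U s).symm (h s))
      else (-(U t ∘L (1 - p)) : E →L[ℝ] E) ((U s).symm (h s)) :=
    .ite measurableSet_Iic (hmeas _) (hmeas _)
  refine hpiecewise.aestronglyMeasurable.congr (Eventually.of_forall fun s => ?_)
  by_cases hs : s ≤ t <;> simp [greenOperator, hs]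

theorem greenIntegral_sub (H : OperatorDichotomy a U p α K) (h k : ℝ →ᵇ E) (t : ℝ) :
    greenIntegral U p h t - greenIntegral U p k t = greenIntegral U p ⇑(h - k) t := by
  simp only [greenIntegral, BoundedContinuousFunction.coe_sub, Pi.sub_apply, map_sub]
  exact (integral_sub (H.integrable_greenOperator_apply h t)
    (H.integrable_greenOperator_apply k t)).symm

theorem norm_greenIntegral_sub_le (H : OperatorDichotomy a U p α K) (h k : ℝ →ᵇ E) (t : ℝ) :
    ‖greenIntegral U p h t - greenIntegral U p k t‖ ≤ 2 * K / α * dist h k := by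
  rw [H.greenIntegral_sub, dist_eq_norm]
  exact H.norm_greenIntegral_le _ t

-- Variation of constants: in the coordinates `(U t).symm x` the equation becomes a quadrature.
theorem greenIntegral_eq (H : OperatorDichotomy a U p α K) (h : ℝ →ᵇ E) (t : ℝ) :
    greenIntegral U p h t = U t ((U 0).symm (greenIntegral U p h 0) +
      ∫ s in (0)..t, (U s).symm (h s)) := by
  have hint (r : ℝ) : Integrable fun s =>
      (U r).symm (greenOperator U p r s (h s)) :=
    ((U r).symm : E →L[ℝ] E).integrable_comp (H.integrable_greenOperator_apply h r)
  have hcoord (r : ℝ) : (U r).symm (greenIntegral U p h r) =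
      ∫ s, (U r).symm (greenOperator U p r s (h s)) :=
    (((U r).symm : E →L[ℝ] E).integral_comp_comm (H.integrable_greenOperator_apply h r)).symm
  have hIoc (r q : ℝ) : IntegrableOn (fun s => (U s).symm (h s)) (Set.Ioc r q) :=
    (H.continuous_symm.clm_apply h.continuous).integrableOn_Ioc
  have hquad : (U t).symm (greenIntegral U p h t) -
      (U 0).symm (greenIntegral U p h 0) =
      ∫ s in (0)..t, (U s).symm (h s) := by
    simp only [hcoord, ← integral_sub (hint t) (hint 0), symm_greenOperator_apply_sub]
    rw [integral_sub ((hIoc _ _).integrable_indicator measurableSet_Ioc)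
      ((hIoc _ _).integrable_indicator measurableSet_Ioc), integral_indicator measurableSet_Ioc,
      integral_indicator measurableSet_Ioc]
    rfl
  rw [← hquad, add_sub_cancel, ContinuousLinearEquiv.apply_symm_apply]

theorem hasDerivAt_greenIntegral (H : OperatorDichotomy a U p α K) (h : ℝ →ᵇ E) (t : ℝ) :
    HasDerivAt (greenIntegral U p h) (a t (greenIntegral U p h t) + h t) t := by
  have hquad :=
    ((H.continuous_symm.clm_apply h.continuous).integral_hasStrictDerivAt 0 t).hasDerivAt
  convert (H.hasDerivAt t).clm_apply
    (hquad.const_add ((U 0).symm (greenIntegral U p h 0))) using 1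
  · exact funext (H.greenIntegral_eq h)
  · simp [H.greenIntegral_eq h t]

theorem symm_apply_eq_of_hasDerivAt (H : OperatorDichotomy a U p α K) {w : ℝ → E}
    (hw : ∀ t, HasDerivAt w (a t (w t)) t) (t s : ℝ) :
    (U t).symm (w t) = (U s).symm (w s) := by
  have hderiv (r : ℝ) : HasDerivAt (fun r => (U r).symm (w r)) 0 r := by
    simpa using (H.hasDerivAt_symm r).clm_apply (hw r)
  exact is_const_of_deriv_eq_zero (fun r => (hderiv r).differentiableAt)
    (fun r => (hderiv r).deriv) t s

theorem eq_zero_of_hasDerivAt (H : OperatorDichotomy a U p α K) {w : ℝ → E} {C : ℝ}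
    (hC : ∀ t, ‖w t‖ ≤ C) (hw : ∀ t, HasDerivAt w (a t (w t)) t) (t : ℝ) : w t = 0 := by
  -- The stable part of `w t` is transported from the past, the unstable part from the future.
  have hsplit {x : ℝ} (hx : 0 < x) : w t = greenOperator U p t (t - x) (w (t - x)) -
      greenOperator U p t (t + x) (w (t + x)) := by
    rw [greenOperator, greenOperator, if_pos (by linarith), if_neg (by linarith)]
    simp [H.symm_apply_eq_of_hasDerivAt hw _ t]
  have hdecay {x : ℝ} (hx : 0 < x) : ‖w t‖ ≤ 2 * K * C * Real.exp (-α * x) := by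
    have hG (s : ℝ) : ‖greenOperator U p t s (w s)‖ ≤ K * Real.exp (-α * |t - s|) * C :=
      (greenOperator U p t s).le_of_opNorm_le_of_le (H.norm_greenOperator_le t s) (hC s)
    rw [hsplit hx]
    refine (norm_sub_le_of_le (hG _) (hG _)).trans_eq ?_
    rw [sub_sub_cancel, sub_add_cancel_left, abs_neg, abs_of_pos hx]
    ring
  have hexp : Tendsto (fun x => 2 * K * C * Real.exp (-α * x)) atTop (𝓝 0) := by
    simpa using (Real.tendsto_exp_atBot.comp
      (tendsto_id.const_mul_atTop_of_neg (neg_neg_of_pos H.exponent_pos))).const_mul (2 * K * C)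
  exact norm_le_zero_iff.1 (ge_of_tendsto hexp ((eventually_gt_atTop 0).mono fun x => hdecay))

theorem eq_greenIntegral_of_hasDerivAt (H : OperatorDichotomy a U p α K) {x : ℝ → E} {C : ℝ}
    (hC : ∀ t, ‖x t‖ ≤ C) {h : ℝ →ᵇ E} (hx : ∀ t, HasDerivAt x (a t (x t) + h t) t) :
    x = greenIntegral U p h := by
  refine funext fun t => sub_eq_zero.1 (H.eq_zero_of_hasDerivAt (w := x - greenIntegral U p h)
    (fun t => norm_sub_le_of_le (hC t) (H.norm_greenIntegral_le h t)) (fun t => ?_) t)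
  simpa using (hx t).sub (H.hasDerivAt_greenIntegral h t)

theorem norm_sub_le_of_hasDerivAt (H : OperatorDichotomy a U p α K) {ψ χ : ℝ → E}
    {h k : ℝ →ᵇ E} (hψ : ∀ t, HasDerivAt ψ (a t (ψ t) + h t) t)
    (hχ : ∀ t, HasDerivAt χ (a t (χ t) + k t) t) {r q η : ℝ} (hr : ∀ t, ‖ψ t - χ t‖ ≤ r)
    (hq : 0 ≤ q) (hq1 : 2 * K / α * q < 1) (hhk : ∀ t, ‖h t - k t‖ ≤ q * ‖ψ t - χ t‖ + η)
    (t : ℝ) : ‖ψ t - χ t‖ ≤ 2 * K / α * η / (1 - 2 * K / α * q) := by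
  have hw (t : ℝ) : HasDerivAt (ψ - χ) (a t ((ψ - χ) t) + (h - k) t) t :=
    ((hψ t).sub (hχ t)).congr_deriv (by simp [add_sub_add_comm])
  let w : ℝ →ᵇ E := .ofNormedAddCommGroup (ψ - χ)
    (continuous_iff_continuousAt.2 fun t => (hw t).continuousAt) r hr
  have hhkw : ‖h - k‖ ≤ q * ‖w‖ + η := (h - k).norm_le_of_nonempty.2 fun t =>
    (hhk t).trans (by gcongr; exact w.norm_coe_le_norm t)
  have hself : ‖w‖ ≤ 2 * K / α * (q * ‖w‖ + η) := by
    refine w.norm_le_of_nonempty.2 fun t => ?_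
    have hwt : w t = greenIntegral U p ⇑(h - k) t :=
      congrFun (H.eq_greenIntegral_of_hasDerivAt hr hw) t
    have hc := H.two_mul_div_nonneg
    rw [hwt]
    exact (H.norm_greenIntegral_le _ t).trans (by gcongr)
  exact (w.norm_coe_le_norm t).trans ((le_div_iff₀ (sub_pos.2 hq1)).2 (by linarith))

end OperatorDichotomy

end ExponentialDichotomy

section NonlinearPerturbation

variable {E : Type*} [NormedAddCommGroup E]

/-- The remotely almost periodic functions that stay within distance `r` of `ξ`. -/
def rapTube (ξ : ℝ → E) (r : ℝ) : Set (ℝ →ᵇ E) :=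
  {φ | RAP φ ∧ ∀ t, ‖φ t - ξ t‖ ≤ r}

theorem isClosed_rapTube (ξ : ℝ → E) (r : ℝ) : IsClosed (rapTube ξ r) := by
  simp only [rapTube, Set.ofPred_and, Set.ofPred_forall]
  exact isClosed_setOf_rap.inter (isClosed_iInter fun t => isClosed_le
    ((continuous_eval_const t).sub continuous_const).norm
    continuous_const)

variable [NormedSpace ℝ E] [CompleteSpace E] {a : ℝ → E →L[ℝ] E} {U : ℝ → E ≃L[ℝ] E}
  {p : E →L[ℝ] E} {α K : ℝ} {F : ℝ → E → E} {S : Set E} {q : ℝ≥0} {ξ : ℝ → E} {r η : ℝ}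

namespace OperatorDichotomy

theorem norm_sub_le_of_lipschitzOnWith (H : OperatorDichotomy a U p α K) (hF : RAPUniform F S)
    (hLip : ∀ t, LipschitzOnWith q (F t) S) (hq : 2 * K / α * q < 1) {ψ χ : ℝ → E} {k : ℝ →ᵇ E}
    (hψ : ∀ t, HasDerivAt ψ (a t (ψ t) + F t (ψ t)) t)
    (hχ : ∀ t, HasDerivAt χ (a t (χ t) + k t) t) (hψS : ∀ t, ψ t ∈ S) (hχS : ∀ t, χ t ∈ S)
    (hr : ∀ t, ‖ψ t - χ t‖ ≤ r) (hη : ∀ t, ‖F t (χ t) - k t‖ ≤ η) (t : ℝ) :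
    ‖ψ t - χ t‖ ≤ 2 * K / α * η / (1 - 2 * K / α * q) := by
  have hψc : Continuous ψ := continuous_iff_continuousAt.2 fun t => (hψ t).continuousAt
  refine H.norm_sub_le_of_hasDerivAt (h := hF.superposition hψc hψS) hψ hχ hr q.coe_nonneg hq
    (fun t => ?_) t
  calc ‖F t (ψ t) - k t‖ ≤ ‖F t (ψ t) - F t (χ t)‖ + ‖F t (χ t) - k t‖ :=
        norm_sub_le_norm_sub_add_norm_sub _ _ _
    _ ≤ q * ‖ψ t - χ t‖ + η :=
        add_le_add ((hLip t).norm_sub_le (hψS t) (hχS t)) (hη t)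

theorem norm_greenIntegral_superposition_sub_le (H : OperatorDichotomy a U p α K)
    (hF : RAPUniform F S) (hLip : ∀ t, LipschitzOnWith q (F t) S) {C : ℝ} (hξ : ∀ t, ‖ξ t‖ ≤ C)
    {k : ℝ →ᵇ E} (hξsol : ∀ t, HasDerivAt ξ (a t (ξ t) + k t) t) (hξS : ∀ t, ξ t ∈ S)
    {φ : ℝ → E} (hφ : Continuous φ) (hφS : ∀ t, φ t ∈ S) (hφr : ∀ t, ‖φ t - ξ t‖ ≤ r)
    (hη : ∀ t, ‖F t (ξ t) - k t‖ ≤ η) (t : ℝ) :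
    ‖greenIntegral U p (hF.superposition hφ hφS) t - ξ t‖ ≤ 2 * K / α * (q * r + η) := by
  have hdist : dist (hF.superposition hφ hφS) k ≤ q * r + η := by
    refine (BoundedContinuousFunction.dist_le_iff_of_nonempty).2 fun t => ?_
    rw [dist_eq_norm]
    refine (norm_sub_le_norm_sub_add_norm_sub _ (F t (ξ t)) _).trans (add_le_add ?_ (hη t))
    exact ((hLip t).norm_sub_le (hφS t) (hξS t)).trans (by gcongr; exact hφr t)
  have hc := H.two_mul_div_nonneg
  rw [H.eq_greenIntegral_of_hasDerivAt hξ hξsol]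
  exact (H.norm_greenIntegral_sub_le _ _ t).trans (by gcongr)

-- Banach's fixed point theorem for `φ ↦ ∫ G(t, s) F(s, φ(s)) ds` on `rapTube ξ r`.
theorem exists_rap_solution (H : OperatorDichotomy a U p α K)
    (hG : ∀ h, RAP h → RAP (greenIntegral U p h)) (hF : RAPUniform F S)
    (hLip : ∀ t, LipschitzOnWith q (F t) S) (hq : 2 * K / α * q < 1) (hξ : RAP ξ) {k : ℝ →ᵇ E}
    (hξsol : ∀ t, HasDerivAt ξ (a t (ξ t) + k t) t) (hr : 0 ≤ r)
    (hS : ∀ t, closedBall (ξ t) r ⊆ S) (hη : ∀ t, ‖F t (ξ t) - k t‖ ≤ η)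
    (hηr : 2 * K / α * η ≤ (1 - 2 * K / α * q) * r) :
    ∃ ψ, RAP ψ ∧ (∀ t, HasDerivAt ψ (a t (ψ t) + F t (ψ t)) t) ∧ ∀ t, ‖ψ t - ξ t‖ ≤ r := by
  have hc := H.two_mul_div_nonneg
  have hφS (φ : rapTube ξ r) (t : ℝ) : φ.1 t ∈ S := hS t (mem_closedBall_iff_norm.2 (φ.2.2 t))
  have hξS (t : ℝ) : ξ t ∈ S := hS t (mem_closedBall_self hr)
  let N (φ : rapTube ξ r) : ℝ →ᵇ E := hF.superposition φ.1.continuous (hφS φ)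
  have hN (φ : rapTube ξ r) : RAP (greenIntegral U p (N φ)) := hG _ (hF.rap_comp φ.2.1 (hφS φ))
  have hself (φ : rapTube ξ r) (t : ℝ) : ‖greenIntegral U p (N φ) t - ξ t‖ ≤ r :=
    (H.norm_greenIntegral_superposition_sub_le hF hLip hξ.1.choose_spec hξsol
      hξS φ.1.continuous (hφS φ) φ.2.2 hη t).trans (by linarith)
  let T (φ : rapTube ξ r) : rapTube ξ r := ⟨(hN φ).toBCF, hN φ, hself φ⟩
  have hT : ContractingWith (2 * K / α * q).toNNReal T := by
    refine ⟨by simpa using hq, LipschitzWith.of_dist_le' fun φ χ => ?_⟩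
    refine (BoundedContinuousFunction.dist_le (by positivity)).2 fun t => ?_
    have hNdist : dist (N φ) (N χ) ≤ q * dist φ χ :=
      hF.dist_superposition_le hLip (hφS φ) (hφS χ)
    rw [dist_eq_norm, mul_assoc]
    exact (H.norm_greenIntegral_sub_le (N φ) (N χ) t).trans (by gcongr)
  have : Nonempty (rapTube ξ r) := ⟨⟨hξ.toBCF, hξ, fun t => by simpa [RAP.toBCF] using hr⟩⟩
  have : CompleteSpace (rapTube ξ r) := (isClosed_rapTube ξ r).completeSpace_coe
  obtain ⟨ψ, hψ⟩ : ∃ ψ, T ψ = ψ := ⟨_, hT.fixedPoint_isFixedPt⟩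
  have hψeq : greenIntegral U p (N ψ) = ψ.1 := congrArg (fun φ : rapTube ξ r => ⇑φ.1) hψ
  refine ⟨ψ.1, ψ.2.1, fun t => ?_, ψ.2.2⟩
  have := H.hasDerivAt_greenIntegral (N ψ) t
  rwa [hψeq] at this

theorem existsUnique_rap_solution (H : OperatorDichotomy a U p α K)
    (hG : ∀ h, RAP h → RAP (greenIntegral U p h)) (hF : RAPUniform F S)
    (hLip : ∀ t, LipschitzOnWith q (F t) S) (hq : 2 * K / α * q < 1) (hξ : RAP ξ) {k : ℝ →ᵇ E}
    (hξsol : ∀ t, HasDerivAt ξ (a t (ξ t) + k t) t) (hr : 0 ≤ r)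
    (hS : ∀ t, closedBall (ξ t) r ⊆ S) (hη : ∀ t, ‖F t (ξ t) - k t‖ ≤ η)
    (hηr : 2 * K / α * η ≤ (1 - 2 * K / α * q) * r) :
    ∃! ψ, RAP ψ ∧ (∀ t, HasDerivAt ψ (a t (ψ t) + F t (ψ t)) t) ∧ ∀ t, ‖ψ t - ξ t‖ ≤ r := by
  obtain ⟨ψ, hψ⟩ := H.exists_rap_solution hG hF hLip hq hξ hξsol hr hS hη hηr
  refine ⟨ψ, hψ, fun χ hχ => funext fun t => sub_eq_zero.1 (norm_le_zero_iff.1 ?_)⟩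
  have htube {φ : ℝ → E} (hφ : ∀ t, ‖φ t - ξ t‖ ≤ r) (t : ℝ) : φ t ∈ S :=
    hS t (mem_closedBall_iff_norm.2 (hφ t))
  have hdist (t : ℝ) : ‖χ t - ψ t‖ ≤ r + r :=
    (norm_sub_le_norm_sub_add_norm_sub _ (ξ t) _).trans
      (add_le_add (hχ.2.2 t) ((norm_sub_rev _ _).trans_le (hψ.2.2 t)))
  simpa using H.norm_sub_le_of_lipschitzOnWith (η := 0)
    (k := hF.superposition hψ.1.2.1.continuous (htube hψ.2.2)) hF hLip hq hχ.2.1 hψ.2.1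
    (htube hχ.2.2) (htube hψ.2.2) hdist (fun t => by simp [RAPUniform.superposition]) t

section Family

variable {ι : Type*} {l : Filter ι} {f : ℝ → E → E} {g : ι → ℝ → E → E} {m : ℝ≥0} {ℓ : ι → ℝ≥0}
  {η : ι → ℝ}

theorem eventually_existsUnique_rap_solution (H : OperatorDichotomy a U p α K)
    (hG : ∀ h, RAP h → RAP (greenIntegral U p h)) (hf : RAPUniform f S)
    (hfLip : ∀ t, LipschitzOnWith m (f t) S) (hm : 2 * K / α * m < 1) (hξ : RAP ξ)
    (hξsol : ∀ t, HasDerivAt ξ (a t (ξ t) + f t (ξ t)) t) (hr : 0 < r)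
    (hS : ∀ t, closedBall (ξ t) r ⊆ S) (hg : ∀ᶠ ν in l, RAPUniform (g ν) S)
    (hgLip : ∀ᶠ ν in l, ∀ t, LipschitzOnWith (ℓ ν) (g ν t) S)
    (hgη : ∀ᶠ ν in l, ∀ t, ‖g ν t (ξ t)‖ ≤ η ν)
    (hℓ : Tendsto ℓ l (𝓝 0)) (hη : Tendsto η l (𝓝 0)) :
    ∀ᶠ ν in l, ∃! ψ, RAP ψ ∧ (∀ t, HasDerivAt ψ (a t (ψ t) + f t (ψ t) + g ν t (ψ t)) t) ∧
      ∀ t, ‖ψ t - ξ t‖ ≤ r := by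
  have hξS (t : ℝ) : ξ t ∈ S := hS t (mem_closedBall_self hr.le)
  have hq : Tendsto (fun ν => 2 * K / α * ↑(m + ℓ ν)) l (𝓝 (2 * K / α * m)) := by
    simpa using (NNReal.tendsto_coe.2 (hℓ.const_add m)).const_mul (2 * K / α)
  have hsmall : Tendsto (fun ν => 2 * K / α * η ν) l (𝓝 0) := by
    simpa using hη.const_mul (2 * K / α)
  have hlim : 0 < (1 - 2 * K / α * m) * r := mul_pos (sub_pos.2 hm) hr
  filter_upwards [hg, hgLip, hgη, hq.eventually_lt_const hm,
    hsmall.eventually_lt ((hq.const_sub 1).mul_const r) hlim] with ν hgν hLipν hην hqν hrν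
  simp only [add_assoc]
  exact H.existsUnique_rap_solution (k := hf.superposition hξ.2.1.continuous hξS) hG (hf.add hgν)
    (fun t => (hfLip t).add (hLipν t)) hqν hξ hξsol hr.le hS
    (fun t => by simpa [RAPUniform.superposition] using hην t) hrν.le

theorem tendstoUniformly_of_hasDerivAt (H : OperatorDichotomy a U p α K) (hf : RAPUniform f S)
    (hfLip : ∀ t, LipschitzOnWith m (f t) S) (hm : 2 * K / α * m < 1)
    (hξsol : ∀ t, HasDerivAt ξ (a t (ξ t) + f t (ξ t)) t) (hξS : ∀ t, ξ t ∈ S)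
    (hg : ∀ᶠ ν in l, RAPUniform (g ν) S)
    (hgLip : ∀ᶠ ν in l, ∀ t, LipschitzOnWith (ℓ ν) (g ν t) S)
    (hgη : ∀ᶠ ν in l, ∀ t, ‖g ν t (ξ t)‖ ≤ η ν)
    (hℓ : Tendsto ℓ l (𝓝 0)) (hη : Tendsto η l (𝓝 0)) {ψ : ι → ℝ → E}
    (hψ : ∀ᶠ ν in l, ∀ t, HasDerivAt (ψ ν) (a t (ψ ν t) + f t (ψ ν t) + g ν t (ψ ν t)) t)
    (hψS : ∀ᶠ ν in l, ∀ t, ψ ν t ∈ S) (hψr : ∀ᶠ ν in l, ∀ t, ‖ψ ν t - ξ t‖ ≤ r) :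
    TendstoUniformly ψ ξ l := by
  have hξc : Continuous ξ := continuous_iff_continuousAt.2 fun t => (hξsol t).continuousAt
  have hq : Tendsto (fun ν => 2 * K / α * ↑(m + ℓ ν)) l (𝓝 (2 * K / α * m)) := by
    simpa using (NNReal.tendsto_coe.2 (hℓ.const_add m)).const_mul (2 * K / α)
  have hbound : Tendsto (fun ν => 2 * K / α * η ν / (1 - 2 * K / α * ↑(m + ℓ ν))) l (𝓝 0) := by
    simpa [Pi.div_def] using (hη.const_mul (2 * K / α)).div (hq.const_sub 1) (sub_pos.2 hm).ne'
  refine Metric.tendstoUniformly_iff.2 fun ε hε => ?_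
  filter_upwards [hg, hgLip, hgη, hψ, hψS, hψr, hq.eventually_lt_const hm,
    hbound.eventually_lt_const hε] with ν hgν hLipν hην hψν hψSν hψrν hqν hεν t
  rw [dist_comm, dist_eq_norm]
  refine (H.norm_sub_le_of_lipschitzOnWith (k := hf.superposition hξc hξS) (hf.add hgν)
    (fun t => (hfLip t).add (hLipν t)) hqν (fun t => ?_) hξsol hψSν hξS hψrν (fun t => ?_)
    t).trans_lt hεν
  · simpa only [add_assoc] using hψν t
  · simpa [RAPUniform.superposition] using hην t

end Family

end OperatorDichotomy

theorem tendsto_iSup_norm_sub_of_tendstoUniformly {ι X F : Type*} [SeminormedAddCommGroup F]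
    {l : Filter ι} {ψ : ι → X → F} {ξ : X → F} (h : TendstoUniformly ψ ξ l) :
    Tendsto (fun ν => ⨆ t, ‖ψ ν t - ξ t‖) l (𝓝 0) := by
  refine Metric.tendsto_nhds.2 fun ε hε => ?_
  filter_upwards [Metric.tendstoUniformly_iff.1 h (ε / 2) (half_pos hε)] with ν hν
  rw [Real.dist_0_eq_abs, abs_of_nonneg (Real.iSup_nonneg fun t => norm_nonneg _)]
  refine (Real.iSup_le (fun t => ?_) (half_pos hε).le).trans_lt (half_lt_self hε)
  rw [← dist_eq_norm, dist_comm]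
  exact (hν t).le

theorem tendsto_update_nhdsGE {α β : Type*} [PartialOrder α] [TopologicalSpace α] [DecidableEq α]
    [TopologicalSpace β] {u : α → β} {x : α} {y : β} (hu : Tendsto u (𝓝[>] x) (𝓝 y)) :
    Tendsto (Function.update u x y) (𝓝[≥] x) (𝓝 y) := by
  have hcont : ContinuousWithinAt (Function.update u x y) (Set.Ici x) x :=
    continuousWithinAt_update_same.2 (by rwa [Set.Ici_sdiff_left])
  simpa [ContinuousWithinAt] using hcont

theorem RAP_solutions_converge_to_xi_general {f : ℝ → E → E} {g : ℝ → E → ℝ → E} {m : ℝ≥0}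
    {ℓ : ℝ → ℝ≥0} {η : ℝ → ℝ} {νbar : ℝ} (H : OperatorDichotomy a U p α K)
    (hG : ∀ h, RAP h → RAP (greenIntegral U p h)) (hνbar : 0 < νbar) (hf : RAPUniform f S)
    (hfLip : ∀ t, LipschitzOnWith m (f t) S) (hm : 2 * K / α * m < 1) (hξ : RAP ξ)
    (hξsol : ∀ t, HasDerivAt ξ (a t (ξ t) + f t (ξ t)) t) (hr : 0 < r)
    (hS : ∀ t, closedBall (ξ t) r ⊆ S)
    (hg : ∀ ν ∈ Set.Icc 0 νbar, RAPUniform (fun t x => g t x ν) S)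
    (hg0 : ∀ t x, g t x 0 = 0)
    (hgLip : ∀ ν ∈ Set.Icc 0 νbar, ∀ t, LipschitzOnWith (ℓ ν) (fun x => g t x ν) S)
    (hgη : ∀ ν ∈ Set.Icc 0 νbar, ∀ t, ‖g t (ξ t) ν‖ ≤ η ν)
    (hℓ : Tendsto ℓ (𝓝[>] 0) (𝓝 0)) (hη : Tendsto η (𝓝[>] 0) (𝓝 0)) :
    ∃ ν₀ > 0, ν₀ ≤ νbar ∧
      (∀ ν ∈ Set.Icc 0 ν₀, ∃! ψ, RAP ψ ∧
        (∀ t, HasDerivAt ψ (a t (ψ t) + f t (ψ t) + g t (ψ t) ν) t) ∧ ∀ t, ‖ψ t - ξ t‖ ≤ r) ∧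
      ∀ ψ : ℝ → ℝ → E, (∀ ν ∈ Set.Icc 0 ν₀,
        (∀ t, HasDerivAt (ψ ν) (a t (ψ ν t) + f t (ψ ν t) + g t (ψ ν t) ν) t) ∧
          ∀ t, ‖ψ ν t - ξ t‖ ≤ r) →
        Tendsto (fun ν => ⨆ t, ‖ψ ν t - ξ t‖) (𝓝[Set.Ioc 0 ν₀] 0) (𝓝 0) ∧
          ∀ t, Tendsto (fun ν => ψ ν t) (𝓝[Set.Ioc 0 ν₀] 0) (𝓝 (ξ t)) := by
  have hIcc : ∀ᶠ ν in 𝓝[≥] (0 : ℝ), ν ∈ Set.Icc 0 νbar := Icc_mem_nhdsGE hνbar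
  have hgLip' : ∀ᶠ ν in 𝓝[≥] 0, ∀ t,
      LipschitzOnWith (Function.update ℓ 0 0 ν) (fun x => g t x ν) S := by
    filter_upwards [hIcc] with ν hν t
    rcases eq_or_ne ν 0 with rfl | hν0
    · simp [hg0]
    · simpa [hν0] using hgLip ν hν t
  have hgη' : ∀ᶠ ν in 𝓝[≥] 0, ∀ t, ‖g t (ξ t) ν‖ ≤ Function.update η 0 0 ν := by
    filter_upwards [hIcc] with ν hν t
    rcases eq_or_ne ν 0 with rfl | hν0
    · simp [hg0]
    · simpa [hν0] using hgη ν hν t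
  obtain ⟨ν₁, hν₁, hsol⟩ := mem_nhdsGE_iff_exists_Icc_subset.1 <|
    H.eventually_existsUnique_rap_solution (g := fun ν t x => g t x ν) hG hf hfLip hm hξ hξsol hr
      hS (hIcc.mono hg) hgLip' hgη' (tendsto_update_nhdsGE hℓ) (tendsto_update_nhdsGE hη)
  refine ⟨min ν₁ νbar, lt_min hν₁ hνbar, min_le_right _ _,
    fun ν hν => hsol ⟨hν.1, hν.2.trans (min_le_left _ _)⟩, fun ψ hψ => ?_⟩
  have hIoc : 𝓝[Set.Ioc 0 (min ν₁ νbar)] (0 : ℝ) ≤ 𝓝[>] 0 :=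
    nhdsWithin_mono 0 Set.Ioc_subset_Ioi_self
  have hmem : ∀ᶠ ν in 𝓝[Set.Ioc 0 (min ν₁ νbar)] (0 : ℝ), ν ∈ Set.Icc 0 (min ν₁ νbar) :=
    eventually_mem_nhdsWithin.mono fun _ => Set.mem_Icc_of_Ioc
  have hmem' := hmem.mono fun _ hν => Set.Icc_subset_Icc_right (min_le_right ν₁ νbar) hν
  have hconv : TendstoUniformly ψ ξ (𝓝[Set.Ioc 0 (min ν₁ νbar)] 0) :=
    H.tendstoUniformly_of_hasDerivAt (g := fun ν t x => g t x ν) hf hfLip hm hξsol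
      (fun t => hS t (mem_closedBall_self hr.le)) (hmem'.mono hg) (hmem'.mono hgLip)
      (hmem'.mono hgη) (hℓ.mono_left hIoc) (hη.mono_left hIoc) (hmem.mono fun ν hν => (hψ ν hν).1)
      (hmem.mono fun ν hν t => hS t (mem_closedBall_iff_norm.2 ((hψ ν hν).2 t)))
      (hmem.mono fun ν hν => (hψ ν hν).2)
  exact ⟨tendsto_iSup_norm_sub_of_tendstoUniformly hconv, hconv.tendsto_at⟩

end NonlinearPerturbation

section FundamentalMatrix

variable {n : ℕ} {A Φ : ℝ → Matrix (Fin n) (Fin n) ℝ} {P : Matrix (Fin n) (Fin n) ℝ} {α K : ℝ}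

open Matrix (toEuclideanCLM)

/-- The evolution operators on Euclidean space given by a fundamental matrix. -/
noncomputable def IsFundamentalMatrix.evolution (hΦ : IsFundamentalMatrix A Φ) (t : ℝ) :
    EuclideanSpace ℝ (Fin n) ≃L[ℝ] EuclideanSpace ℝ (Fin n) :=
  ContinuousLinearEquiv.unitsEquiv ℝ _
    (Units.map (MonoidHomClass.toMonoidHom (toEuclideanCLM (𝕜 := ℝ))) (hΦ.2.1 t).unit)

theorem IsFundamentalMatrix.coe_evolution (hΦ : IsFundamentalMatrix A Φ) (t : ℝ) :
    (hΦ.evolution t : EuclideanSpace ℝ (Fin n) →L[ℝ] _) = toEuclideanCLM (𝕜 := ℝ) (Φ t) :=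
  rfl

theorem IsFundamentalMatrix.coe_evolution_symm (hΦ : IsFundamentalMatrix A Φ) (t : ℝ) :
    ((hΦ.evolution t).symm : EuclideanSpace ℝ (Fin n) →L[ℝ] _) =
      toEuclideanCLM (𝕜 := ℝ) (Φ t)⁻¹ := by
  change toEuclideanCLM (𝕜 := ℝ) (↑(hΦ.2.1 t).unit⁻¹ : Matrix (Fin n) (Fin n) ℝ) = _
  rw [Matrix.coe_units_inv, IsUnit.unit_spec]

theorem IsFundamentalMatrix.hasDerivAt_evolution (hΦ : IsFundamentalMatrix A Φ) (t : ℝ) :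
    HasDerivAt (fun s => (hΦ.evolution s : EuclideanSpace ℝ (Fin n) →L[ℝ] _))
      (toEuclideanCLM (𝕜 := ℝ) (A t) ∘L hΦ.evolution t) t := by
  have hsum (B : Matrix (Fin n) (Fin n) ℝ) : toEuclideanCLM (𝕜 := ℝ) B =
      ∑ i, ∑ j, B i j • toEuclideanCLM (𝕜 := ℝ) (Matrix.single i j 1) := by
    conv_lhs => rw [Matrix.matrix_eq_sum_single B]
    simp only [map_sum, ← map_smul, Matrix.smul_single, smul_eq_mul, mul_one]
  simp only [coe_evolution, ← ContinuousLinearMap.mul_def, ← map_mul]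
  simp only [hsum (Φ _), hsum (A t * Φ t)]
  exact HasDerivAt.fun_sum fun i _ => HasDerivAt.fun_sum fun j _ =>
    (hΦ.2.2 t i j).smul_const (toEuclideanCLM (𝕜 := ℝ) (Matrix.single i j (1 : ℝ)))

theorem ExpDichotomy.operatorDichotomy (hd : ExpDichotomy Φ α K P) (hα : 0 < α)
    (hΦ : IsFundamentalMatrix A Φ) :
    OperatorDichotomy (fun t => toEuclideanCLM (𝕜 := ℝ) (A t)) hΦ.evolution
      (toEuclideanCLM (𝕜 := ℝ) P) α K where
  hasDerivAt := hΦ.hasDerivAt_evolution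
  exponent_pos := hα
  isIdempotentElem := IsIdempotentElem.map hd.1 _
  norm_stable_le {t s} hst := by
    rw [hΦ.coe_evolution, hΦ.coe_evolution_symm, ← ContinuousLinearMap.comp_assoc]
    simp only [← ContinuousLinearMap.mul_def, ← map_mul]
    exact hd.2.1 t s hst
  norm_unstable_le {t s} hts := by
    rw [hΦ.coe_evolution, hΦ.coe_evolution_symm, ← ContinuousLinearMap.comp_assoc,
      ← map_one (toEuclideanCLM (𝕜 := ℝ) (n := Fin n)), ← map_sub]
    simp only [← ContinuousLinearMap.mul_def, ← map_mul]
    exact hd.2.2 t s hts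

theorem IsFundamentalMatrix.toEuclideanCLM_greenKernel (hΦ : IsFundamentalMatrix A Φ)
    (P : Matrix (Fin n) (Fin n) ℝ) (t s : ℝ) :
    toEuclideanCLM (𝕜 := ℝ) (GreenKernel Φ P t s) =
      greenOperator hΦ.evolution (toEuclideanCLM (𝕜 := ℝ) P) t s := by
  rw [GreenKernel, greenOperator, hΦ.coe_evolution, hΦ.coe_evolution_symm,
    ← map_one (toEuclideanCLM (𝕜 := ℝ) (n := Fin n)), ← map_sub]
  split_ifs <;> simp only [← ContinuousLinearMap.mul_def, ← map_mul, ← map_neg, mul_assoc]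

theorem mulVecE_eq_toEuclideanCLM_apply (B : Matrix (Fin n) (Fin n) ℝ)
    (v : EuclideanSpace ℝ (Fin n)) : mulVecE B v = toEuclideanCLM (𝕜 := ℝ) B v :=
  rfl

theorem RAPIntegralProperty.rap_greenIntegral (hGreen : RAPIntegralProperty (GreenKernel Φ P))
    (hΦ : IsFundamentalMatrix A Φ) {h : ℝ → EuclideanSpace ℝ (Fin n)} (hh : RAP h) :
    RAP (greenIntegral hΦ.evolution (toEuclideanCLM (𝕜 := ℝ) P) h) := by
  have := hGreen h hh
  simp only [mulVecE_eq_toEuclideanCLM_apply, hΦ.toEuclideanCLM_greenKernel] at this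
  exact this

end FundamentalMatrix

theorem lipschitzOnWith_closedBall_zero {E F : Type*} [SeminormedAddCommGroup E]
    [SeminormedAddCommGroup F] {φ : E → F} {M R : ℝ}
    (h : ∀ x y, ‖x‖ ≤ R → ‖y‖ ≤ R → ‖φ x - φ y‖ ≤ M * ‖x - y‖) :
    LipschitzOnWith M.toNNReal φ (closedBall 0 R) :=
  LipschitzOnWith.of_dist_le_mul fun x hx y hy => by
    rw [dist_eq_norm, dist_eq_norm]
    exact (h x y (mem_closedBall_zero_iff.1 hx) (mem_closedBall_zero_iff.1 hy)).trans
      (by gcongr; exact Real.le_coe_toNNReal M)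

theorem two_mul_div_mul_toNNReal_lt_one {α K M : ℝ} (hα : 0 < α) (hK : 0 < K)
    (hM : M < α / (2 * K)) : 2 * K / α * M.toNNReal < 1 := by
  have hM' : (M.toNNReal : ℝ) < α / (2 * K) :=
    (Real.coe_toNNReal' M).trans_lt (max_lt hM (by positivity))
  rwa [← lt_div_iff₀' (by positivity), one_div_div]

/-- convergence of the perturbed RAP solutions `ψ_ν` to `ξ` as `ν → 0⁺`,
under (H1)-(H4) and uniform continuity of `g`. -/
theorem RAP_solutions_converge_to_xi {n : ℕ}
    (A Φ : ℝ → Matrix (Fin n) (Fin n) ℝ)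
    (P : Matrix (Fin n) (Fin n) ℝ) (α K : ℝ)
    (f : ℝ → EuclideanSpace ℝ (Fin n) → EuclideanSpace ℝ (Fin n))
    (ξ : ℝ → EuclideanSpace ℝ (Fin n))
    (g : ℝ → EuclideanSpace ℝ (Fin n) → ℝ → EuclideanSpace ℝ (Fin n))
    (νbar : ℝ) (M : ℝ → ℝ) (M₁ GN : ℝ → ℝ → ℝ)
    (hα : 0 < α) (hK : 1 ≤ K) (hνbar : 0 < νbar)
    -- (H1)
    (hARAP : RAPMatrix A)
    (hΦ : IsFundamentalMatrix A Φ)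
    (hdich : ExpDichotomy Φ α K P)
    (hGreen : RAPIntegralProperty (GreenKernel Φ P))
    -- (H2)
    (hfRAP : ∀ S : Set (EuclideanSpace ℝ (Fin n)), IsCompact S → RAPUniform f S)
    (hM : ∀ r > 0, M r < α / (2 * K))
    (hflip : ∀ r > 0, ∀ t : ℝ, ∀ x y : EuclideanSpace ℝ (Fin n),
      ‖x‖ ≤ r → ‖y‖ ≤ r → ‖f t x - f t y‖ ≤ M r * ‖x - y‖)
    (hξRAP : RAP ξ)
    (hξsol : ∀ t, HasDerivAt ξ (mulVecE (A t) (ξ t) + f t (ξ t)) t)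
    (hξuniq : ∀ η : ℝ → EuclideanSpace ℝ (Fin n), RAP η →
      (∀ t, HasDerivAt η (mulVecE (A t) (η t) + f t (η t)) t) → η = ξ)
    -- (H3)
    (hfC2 : ∀ t, ContDiff ℝ 2 (f t))
    (hf2lip : ∀ r > 0, ∃ L, ∀ t : ℝ, ∀ x y : EuclideanSpace ℝ (Fin n),
      ‖x‖ ≤ r → ‖y‖ ≤ r →
      ‖fderiv ℝ (fderiv ℝ (f t)) x - fderiv ℝ (fderiv ℝ (f t)) y‖ ≤ L * ‖x - y‖)
    (hDfRAP : RAP (fun t => fderiv ℝ (f t) (ξ t)))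
    (hDfbdd : BddAbove (Set.range fun t => ‖fderiv ℝ (f t) (ξ t)‖))
    (δ : ℝ) (hδdef : δ = ⨆ t, ‖fderiv ℝ (f t) (ξ t)‖)
    (hδ : δ < α / (4 * K ^ 2))
    (hvarGreen : ∃ (Ψ : ℝ → Matrix (Fin n) (Fin n) ℝ)
        (Q : Matrix (Fin n) (Fin n) ℝ) (β L : ℝ),
      IsFundamentalMatrix (fun t => A t + clmToMatrix (fderiv ℝ (f t) (ξ t))) Ψ ∧
      ExpDichotomy Ψ β L Q ∧ RAPIntegralProperty (GreenKernel Ψ Q))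
    -- (H4)
    (hgRAP : ∀ S : Set (EuclideanSpace ℝ (Fin n) × ℝ), Bornology.IsBounded S →
      RAPUniform (fun t p => g t p.1 p.2) S)
    (hg0 : ∀ t x, g t x 0 = 0)
    (hgbdd : ∀ ν ∈ Set.Icc (0:ℝ) νbar, ∀ r > 0, ∃ C, ∀ t : ℝ,
      ∀ x : EuclideanSpace ℝ (Fin n), ‖x‖ ≤ r → ‖g t x ν‖ ≤ C)
    (hgGN : ∀ r > 0, ∀ ν ∈ Set.Icc (0:ℝ) νbar, ∀ t : ℝ,
      ∀ x : EuclideanSpace ℝ (Fin n), ‖x‖ ≤ r → ‖g t x ν‖ ≤ GN r ν)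
    (hglip : ∀ r > 0, ∀ ν ∈ Set.Icc (0:ℝ) νbar, ∀ t : ℝ,
      ∀ x y : EuclideanSpace ℝ (Fin n), ‖x‖ ≤ r → ‖y‖ ≤ r →
      ‖g t x ν - g t y ν‖ ≤ M₁ r ν * ‖x - y‖)
    (hGN0 : ∀ r > 0, Filter.Tendsto (GN r) (nhdsWithin 0 (Set.Ioi 0)) (nhds 0))
    (hM₁0 : ∀ r > 0, Filter.Tendsto (M₁ r) (nhdsWithin 0 (Set.Ioi 0)) (nhds 0)) :
    ∃ r > 0, ∃ ν₀ > 0, ν₀ ≤ νbar ∧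
      (∀ ν ∈ Set.Icc (0:ℝ) ν₀,
        ∃! ψ : ℝ → EuclideanSpace ℝ (Fin n),
          RAP ψ ∧
          (∀ t, HasDerivAt ψ (mulVecE (A t) (ψ t) + f t (ψ t) + g t (ψ t) ν) t) ∧
          ∀ t, ‖ψ t - ξ t‖ ≤ r) ∧
      (UniformContinuousOn
          (fun p : ℝ × EuclideanSpace ℝ (Fin n) × ℝ => g p.1 p.2.1 p.2.2)
          (Set.univ ×ˢ Metric.closedBall 0 (r + ⨆ t, ‖ξ t‖) ×ˢ Set.Icc 0 ν₀) →
        ∀ ψ : ℝ → ℝ → EuclideanSpace ℝ (Fin n),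
          (∀ ν ∈ Set.Icc (0:ℝ) ν₀, RAP (ψ ν) ∧
            (∀ t, HasDerivAt (ψ ν) (mulVecE (A t) (ψ ν t) + f t (ψ ν t) + g t (ψ ν t) ν) t) ∧
            ∀ t, ‖ψ ν t - ξ t‖ ≤ r) →
          Filter.Tendsto (fun ν => ⨆ t, ‖ψ ν t - ξ t‖)
            (nhdsWithin 0 (Set.Ioc 0 ν₀)) (nhds 0) ∧
          ∀ t, Filter.Tendsto (fun ν => ψ ν t)
            (nhdsWithin 0 (Set.Ioc 0 ν₀)) (nhds (ξ t))) := by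
  simp only [mulVecE_eq_toEuclideanCLM_apply] at hξsol ⊢
  obtain ⟨C, hC⟩ := hξRAP.1
  have hC₀ : 0 ≤ C := (norm_nonneg _).trans (hC 0)
  have hR : 0 < C + 1 := by positivity
  have htube (t : ℝ) : closedBall (ξ t) 1 ⊆ closedBall 0 (C + 1) :=
    closedBall_subset_closedBall' (by rw [dist_zero_right, add_comm C]; gcongr; exact hC t)
  have hgν (ν : ℝ) : RAPUniform (fun t x => g t x ν) (closedBall 0 (C + 1)) :=
    (hgRAP _ (isBounded_closedBall.prod Bornology.isBounded_singleton)).prod_section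
  obtain ⟨ν₀, hν₀, hν₀bar, hsol, hconv⟩ := RAP_solutions_converge_to_xi_general
    (hdich.operatorDichotomy hα hΦ) (fun _ => hGreen.rap_greenIntegral hΦ) hνbar
    (hfRAP _ (isCompact_closedBall 0 (C + 1)))
    (fun t => lipschitzOnWith_closedBall_zero (hflip _ hR t))
    (two_mul_div_mul_toNNReal_lt_one hα (by positivity) (hM _ hR)) hξRAP hξsol one_pos htube
    (fun ν _ => hgν ν) hg0 (fun ν hν t => lipschitzOnWith_closedBall_zero (hglip _ hR ν hν t))
    (fun ν hν t => hgGN _ hR ν hν t _ ((hC t).trans (by linarith)))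
    (by simpa using tendsto_real_toNNReal (hM₁0 _ hR)) (hGN0 _ hR)
  exact ⟨1, one_pos, ν₀, hν₀, hν₀bar, hsol, fun _ ψ hψ => hconv ψ fun ν hν => (hψ ν hν).2⟩
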